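/- arXiv:1303.2527 — 2 statements merged into one kernel-verified Lean document; each statement's English description precedes it below -/
import Mathlib

section
/- Let 0 ≤ α < 1, β ∈ (−π/2, π/2), and let f ∈ Σ with inverse extension g satisfy Re(e^{iβ} z f'(z)/f(z)) > α·cos β for all z ∈ U \ {0} and Re(e^{iβ} w g'(w)/g(w)) > α·cos β for all w ∈ U \ {0}. Then |a₂| ≤ √(2(1−α)cos β) and |a₃| ≤ 2(1−α)cos β, where a₂ = f''(0)/2 and a₃ = f'''(0)/6. -/
open Metric Real Complex

lemma aux_mul2 (A B : ℂ → ℂ) (hA : AnalyticAt ℂ A 0) (hB : AnalyticAt ℂ B 0) :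
    iteratedDeriv 2 (A * B) 0 = A 0 * iteratedDeriv 2 B 0 + 2 * deriv A 0 * deriv B 0
      + iteratedDeriv 2 A 0 * B 0 := by
  rw [iteratedDeriv_mul hA.contDiffAt hB.contDiffAt]
  simp [Finset.sum_range_succ, iteratedDeriv_one]

lemma aux_cara (P : ℂ → ℂ) (m : ℝ) (hP : AnalyticOnNhd ℂ P (ball 0 1))
    (hre : ∀ z ∈ ball (0 : ℂ) 1, m < (P z).re) :
    ‖iteratedDeriv 2 P 0‖ ≤ 4 * ((P 0).re - m) := by
  have h0 : (0 : ℂ) ∈ ball (0 : ℂ) 1 := by simp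
  set c := (P 0).re - m with hc
  have hcpos : 0 < c := by have := hre 0 h0; linarith
  set N : ℂ → ℂ := fun z => P (-z) with hN
  have hNan : AnalyticOnNhd ℂ N (ball 0 1) := by
    intro z hz
    have : AnalyticAt ℂ P (-z) := hP _ (by simpa using hz)
    exact this.fun_comp (f := fun z : ℂ => -z) analyticAt_id.neg
  set Q : ℂ → ℂ := fun z => (P z + N z) * (1/2) - P 0 with hQ
  have hQan : AnalyticOnNhd ℂ Q (ball 0 1) := fun z hz =>
    (((hP z hz).add (hNan z hz)).mul analyticAt_const).sub analyticAt_const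
  have hQre : ∀ z ∈ ball (0 : ℂ) 1, -c < (Q z).re := by
    intro z hz
    have h1 := hre z hz
    have h2 := hre (-z) (by simpa using hz)
    have : (Q z).re = ((P z).re + (P (-z)).re) * (1/2) - (P 0).re := by
      simp [hQ, hN]
    rw [this, hc]; linarith
  have hne : ∀ z ∈ ball (0 : ℂ) 1, Q z + 2 * c ≠ 0 := by
    intro z hz h
    have h1 := hQre z hz
    have h2 := congrArg Complex.re h
    simp at h2
    linarith
  set W : ℂ → ℂ := fun z => Q z / (Q z + 2 * c) with hW
  have hWan : AnalyticOnNhd ℂ W (ball 0 1) := fun z hz =>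
    (hQan z hz).div ((hQan z hz).add analyticAt_const) (hne z hz)
  have hWle : ∀ z ∈ ball (0 : ℂ) 1, ‖W z‖ ≤ 1 := by
    intro z hz
    rw [hW]
    simp only [norm_div]
    rw [div_le_one (norm_pos_iff.2 (hne z hz))]
    rw [← sq_le_sq₀ (norm_nonneg _) (norm_nonneg _), ← Complex.normSq_eq_norm_sq,
      ← Complex.normSq_eq_norm_sq, Complex.normSq_apply, Complex.normSq_apply]
    have := hQre z hz
    simp
    nlinarith
  have hW2 : ‖iteratedDeriv 2 W 0‖ ≤ 2 := by
    have key : ∀ r : ℝ, 0 < r → r < 1 → ‖iteratedDeriv 2 W 0‖ * r ^ 2 ≤ 2 := by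
      intro r hr hr1
      have hsub : closedBall (0 : ℂ) r ⊆ ball 0 1 := closedBall_subset_ball hr1
      have := Complex.norm_iteratedDeriv_le_of_forall_mem_sphere_norm_le (n := 2) (C := 1)
        (c := (0 : ℂ)) (f := W) hr
        (DifferentiableOn.diffContOnCl (by
          rw [closure_ball _ hr.ne']
          exact hWan.differentiableOn.mono hsub))
        (fun z hz => hWle z (hsub (sphere_subset_closedBall hz)))
      rw [le_div_iff₀ (by positivity)] at this
      simpa using this
    have hlim : Filter.Tendsto (fun r : ℝ => ‖iteratedDeriv 2 W 0‖ * r ^ 2)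
        (nhdsWithin 1 (Set.Iio 1)) (nhds (‖iteratedDeriv 2 W 0‖ * 1 ^ 2)) := by
      apply Filter.Tendsto.mono_left _ nhdsWithin_le_nhds
      exact Continuous.tendsto (by fun_prop) 1
    have := le_of_tendsto hlim (b := 2) (by
      filter_upwards [Ioo_mem_nhdsLT (show (0:ℝ) < 1 by norm_num)] with r hr
      exact key r hr.1 hr.2)
    simpa using this
  have hQ0 : Q 0 = 0 := by simp [hQ, hN]; ring
  have hW0 : W 0 = 0 := by simp [hW, hQ0]
  have hN1 : deriv N 0 = - deriv P 0 := by
    have := iteratedDeriv_comp_neg 1 P 0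
    simpa [iteratedDeriv_one] using this
  have hN2 : iteratedDeriv 2 N 0 = iteratedDeriv 2 P 0 := by
    have := iteratedDeriv_comp_neg 2 P 0
    simpa using this
  have hQ1 : ∀ z ∈ ball (0 : ℂ) 1, deriv Q z = (deriv P z + deriv N z) * (1/2) := by
    intro z hz
    exact ((((hP z hz).differentiableAt.hasDerivAt).add
      ((hNan z hz).differentiableAt.hasDerivAt)).mul_const (1/2)|>.sub_const _).deriv
  have hQ10 : deriv Q 0 = 0 := by rw [hQ1 0 h0, hN1]; ring
  have hnb : ball (0 : ℂ) 1 ∈ nhds (0 : ℂ) := ball_mem_nhds _ one_pos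
  have hQ2 : iteratedDeriv 2 Q 0 = iteratedDeriv 2 P 0 := by
    have e : deriv Q =ᶠ[nhds 0] fun z => (deriv P z + deriv N z) * (1/2) := by
      filter_upwards [hnb] with z hz using hQ1 z hz
    rw [iteratedDeriv_succ', iteratedDeriv_one, e.deriv_eq]
    have hd := (((hP 0 h0).deriv.differentiableAt.hasDerivAt.add
      (hNan 0 h0).deriv.differentiableAt.hasDerivAt).mul_const (1/2)).deriv
    simp only [Pi.add_apply] at hd
    rw [hd]
    have a1 : deriv (deriv P) 0 = iteratedDeriv 2 P 0 := by
      rw [iteratedDeriv_succ', iteratedDeriv_one]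
    have a2 : deriv (deriv N) 0 = iteratedDeriv 2 N 0 := by
      rw [iteratedDeriv_succ', iteratedDeriv_one]
    rw [a1, a2, hN2]; ring
  have hprod : Q =ᶠ[nhds 0] W * (fun z => Q z + 2 * c) := by
    filter_upwards [hnb] with z hz
    have := hne z hz
    simp only [Pi.mul_apply, hW]
    field_simp
  have hcn : iteratedDeriv 2 Q 0 = iteratedDeriv 2 W 0 * (2 * c) := by
    rw [hprod.iteratedDeriv_eq 2, aux_mul2 W (fun z => Q z + 2 * c) (hWan 0 h0) ((hQan 0 h0).add analyticAt_const)]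
    have : deriv (fun z => Q z + 2 * (c : ℂ)) 0 = 0 := by
      rw [deriv_add_const, hQ10]
    rw [this, hW0, hQ0]; ring
  rw [← hQ2, hcn, norm_mul]
  have : ‖(2 * c : ℂ)‖ = 2 * c := by
    rw [norm_mul, Complex.norm_real, Real.norm_of_nonneg hcpos.le]; simp
  rw [this]
  nlinarith

lemma aux_star (f : ℂ → ℂ) (β m : ℝ) (hf : AnalyticOnNhd ℂ f (ball 0 1)) (hf0 : f 0 = 0)
    (hf1 : deriv f 0 = 1) (hinj : Set.InjOn f (ball 0 1)) (hm : m < Real.cos β)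
    (hre : ∀ z ∈ ball (0 : ℂ) 1, z ≠ 0 →
      m < (Complex.exp (Complex.I * β) * (z * deriv f z / f z)).re) :
    ‖2 / 3 * iteratedDeriv 3 f 0 - (iteratedDeriv 2 f 0) ^ 2 / 2‖ ≤ 4 * (Real.cos β - m) := by
  have h0 : (0 : ℂ) ∈ ball (0 : ℂ) 1 := by simp
  have hnb : ball (0 : ℂ) 1 ∈ nhds (0 : ℂ) := ball_mem_nhds _ one_pos
  set F := dslope f 0 with hF
  have hFan : AnalyticOnNhd ℂ F (ball 0 1) := by
    apply DifferentiableOn.analyticOnNhd _ isOpen_ball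
    exact (Complex.differentiableOn_dslope hnb).2 hf.differentiableOn
  have hFm : ∀ z, f z = z * F z := by
    intro z
    have := sub_smul_dslope f 0 z
    simpa [hf0] using this.symm
  have hF0 : F 0 = 1 := by simp [hF, hf1]
  have hFne : ∀ z ∈ ball (0 : ℂ) 1, F z ≠ 0 := by
    intro z hz h
    by_cases hz0 : z = 0
    · rw [hz0, hF0] at h; exact one_ne_zero h
    · apply hz0
      apply hinj hz h0
      rw [hFm z, h, hf0, mul_zero]
  set p : ℂ → ℂ := fun z => deriv f z / F z with hp
  have hpan : AnalyticOnNhd ℂ p (ball 0 1) := fun z hz =>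
    (hf z hz).deriv.div (hFan z hz) (hFne z hz)
  set E := Complex.exp (Complex.I * β) with hE
  have hEre : E.re = Real.cos β := by
    rw [hE, mul_comm, Complex.exp_ofReal_mul_I_re]
  have hEn : ‖E‖ = 1 := by
    rw [hE, mul_comm, Complex.norm_exp_ofReal_mul_I]
  have hp0 : p 0 = 1 := by simp [hp, hF0, hf1]
  have hc := aux_cara (fun z => E * p z) m (fun z hz => analyticAt_const.mul (hpan z hz)) (by
    intro z hz
    by_cases hz0 : z = 0
    · rw [hz0, hp0, mul_one, hEre]; exact hm
    · have := hre z hz hz0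
      rw [hFm z] at this
      rwa [mul_div_mul_left _ _ hz0] at this)
  have hlin : iteratedDeriv 2 (fun z => E * p z) 0 = E * iteratedDeriv 2 p 0 := by
    rw [iteratedDeriv_const_mul_field]
  rw [hlin, norm_mul, hEn, one_mul] at hc
  simp only [hp0, mul_one, hEre] at hc
  have hff : f = id * F := funext hFm
  have f2 : iteratedDeriv 2 f 0 = 2 * deriv F 0 := by
    conv_lhs => rw [hff]
    rw [iteratedDeriv_mul contDiffAt_id (hFan 0 h0).contDiffAt]
    simp [Finset.sum_range_succ, iteratedDeriv_one, iteratedDeriv_id]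
  have f3 : iteratedDeriv 3 f 0 = 3 * iteratedDeriv 2 F 0 := by
    conv_lhs => rw [hff]
    rw [iteratedDeriv_mul contDiffAt_id (hFan 0 h0).contDiffAt]
    simp [Finset.sum_range_succ, iteratedDeriv_one, iteratedDeriv_id]
  have hpF : deriv f =ᶠ[nhds 0] p * F := by
    filter_upwards [hnb] with z hz
    have := hFne z hz
    simp only [Pi.mul_apply, hp]
    field_simp
  have e1 : iteratedDeriv 2 f 0 = deriv p 0 + deriv F 0 := by
    rw [iteratedDeriv_succ', iteratedDeriv_one, hpF.deriv_eq,
      deriv_mul (hpan 0 h0).differentiableAt (hFan 0 h0).differentiableAt, hp0, hF0]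
    ring
  have e2 : iteratedDeriv 3 f 0 = iteratedDeriv 2 F 0 + 2 * deriv p 0 * deriv F 0
      + iteratedDeriv 2 p 0 := by
    rw [iteratedDeriv_succ', hpF.iteratedDeriv_eq 2, aux_mul2 _ _ (hpan 0 h0) (hFan 0 h0),
      hp0, hF0]
    ring
  have hfin : iteratedDeriv 2 p 0
      = 2 / 3 * iteratedDeriv 3 f 0 - (iteratedDeriv 2 f 0) ^ 2 / 2 := by
    have h1 : deriv p 0 = deriv F 0 := by linear_combination f2 - e1
    rw [h1] at e2
    rw [f2]
    linear_combination (1/3) * f3 - e2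
  rw [← hfin]
  exact hc

lemma aux_inv (f g : ℂ → ℂ) (hf : AnalyticAt ℂ f 0) (hg : AnalyticAt ℂ g 0)
    (hg0 : g 0 = 0) (hf1 : deriv f 0 = 1)
    (hfg : ∀ᶠ w in nhds (0 : ℂ), f (g w) = w) :
    deriv g 0 = 1 ∧ iteratedDeriv 2 g 0 = - iteratedDeriv 2 f 0 ∧
    iteratedDeriv 3 g 0 = 3 * (iteratedDeriv 2 f 0) ^ 2 - iteratedDeriv 3 f 0 := by
  have hfe : ∀ᶠ w in nhds (0 : ℂ), AnalyticAt ℂ f (g w) := by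
    have := hf.eventually_analyticAt
    rw [← hg0] at this
    exact hg.continuousAt.eventually this
  have hge := hg.eventually_analyticAt
  have d1 : ∀ᶠ w in nhds (0 : ℂ), deriv f (g w) * deriv g w = 1 := by
    filter_upwards [hfe, hge, hfg.eventually_nhds] with w h1 h2 h3
    have a := h1.differentiableAt.hasDerivAt.comp w h2.differentiableAt.hasDerivAt
    have e : (f ∘ g) =ᶠ[nhds w] id := h3
    rw [← a.deriv, e.deriv_eq]; simp
  have d2 : ∀ᶠ w in nhds (0 : ℂ), deriv (deriv f) (g w) * deriv g w * deriv g w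
      + deriv f (g w) * deriv (deriv g) w = 0 := by
    filter_upwards [hfe, hge, d1.eventually_nhds] with w h1 h2 h3
    have a := (h1.deriv.differentiableAt.hasDerivAt.comp w h2.differentiableAt.hasDerivAt).mul
      h2.deriv.differentiableAt.hasDerivAt
    have e : ((deriv f ∘ g) * deriv g) =ᶠ[nhds w] fun _ => 1 := h3
    have := a.deriv
    rw [e.deriv_eq] at this
    simpa using this.symm
  have d3 : (deriv (deriv (deriv f)) (g 0) * deriv g 0 * deriv g 0
      + deriv (deriv f) (g 0) * deriv (deriv g) 0) * deriv g 0
      + deriv (deriv f) (g 0) * deriv g 0 * deriv (deriv g) 0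
      + (deriv (deriv f) (g 0) * deriv g 0 * deriv (deriv g) 0
      + deriv f (g 0) * deriv (deriv (deriv g)) 0) = 0 := by
    have h1 := hfe.self_of_nhds
    have h2 := hg.differentiableAt.hasDerivAt
    have h3 := hg.deriv.differentiableAt.hasDerivAt
    have h4 := hg.deriv.deriv.differentiableAt.hasDerivAt
    have a := (((h1.deriv.deriv.differentiableAt.hasDerivAt.comp 0 h2).mul h3).mul h3).add
      ((h1.deriv.differentiableAt.hasDerivAt.comp 0 h2).mul h4)
    have e : ((((deriv (deriv f)) ∘ g) * deriv g) * deriv g + (deriv f ∘ g) * deriv (deriv g))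
      =ᶠ[nhds 0] fun _ => 0 := d2
    have := a.deriv
    rw [e.deriv_eq] at this
    simpa using this.symm
  have c1 := d1.self_of_nhds
  have c2 := d2.self_of_nhds
  rw [hg0, hf1] at c1 c2 d3
  have k1 : deriv g 0 = 1 := by simpa using c1
  rw [k1] at c2 d3
  have s2 : ∀ h : ℂ → ℂ, iteratedDeriv 2 h = deriv (deriv h) := fun h => by
    rw [iteratedDeriv_succ', iteratedDeriv_one]
  have s3 : ∀ h : ℂ → ℂ, iteratedDeriv 3 h = deriv (deriv (deriv h)) := fun h => by
    rw [iteratedDeriv_succ', s2]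
  have k2 : deriv (deriv g) 0 = - deriv (deriv f) 0 := by linear_combination c2
  rw [k2] at d3
  rw [s2, s2, s3, s3]
  exact ⟨k1, k2, by linear_combination d3⟩

/-- Coefficient bounds for the class `NP^{0,1}_Σ(β,α)` of bi-starlike-type functions. -/
theorem coeff_bounds_NP_starlike
    (α β : ℝ) (hα0 : 0 ≤ α) (hα1 : α < 1)
    (hβ : β ∈ Set.Ioo (-(π / 2)) (π / 2))
    (f g : ℂ → ℂ)
    -- `f` is bi-univalent with inverse extension `g`.
    (hf_an : AnalyticOnNhd ℂ f (ball 0 1)) (hf0 : f 0 = 0) (hf1 : deriv f 0 = 1)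
    (hf_inj : Set.InjOn f (ball 0 1))
    (hg_an : AnalyticOnNhd ℂ g (ball 0 1)) (hg_inj : Set.InjOn g (ball 0 1))
    (hg0 : g 0 = 0) (hfg : ∀ᶠ w in nhds (0 : ℂ), f (g w) = w)
    -- real-part condition for `f`
    (hre_f : ∀ z ∈ ball (0 : ℂ) 1, z ≠ 0 →
      α * Real.cos β < (Complex.exp (Complex.I * β) * (z * deriv f z / f z)).re)
    -- real-part condition for `g`
    (hre_g : ∀ w ∈ ball (0 : ℂ) 1, w ≠ 0 →
      α * Real.cos β < (Complex.exp (Complex.I * β) * (w * deriv g w / g w)).re) :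
    ‖iteratedDeriv 2 f 0 / 2‖ ≤ Real.sqrt (2 * (1 - α) * Real.cos β) ∧
    ‖iteratedDeriv 3 f 0 / 6‖ ≤ 2 * (1 - α) * Real.cos β := by
  have h0 : (0 : ℂ) ∈ ball (0 : ℂ) 1 := by simp
  have hcos : 0 < Real.cos β := Real.cos_pos_of_mem_Ioo hβ
  have hm : α * Real.cos β < Real.cos β := by nlinarith
  obtain ⟨k1, k2, k3⟩ := aux_inv f g (hf_an 0 h0) (hg_an 0 h0) hg0 hf1 hfg
  have X := aux_star f β _ hf_an hf0 hf1 hf_inj hm hre_f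
  have Y := aux_star g β _ hg_an hg0 k1 hg_inj hm hre_g
  rw [k2, k3] at Y
  set A := iteratedDeriv 2 f 0
  set B := iteratedDeriv 3 f 0
  set x := 2 / 3 * B - A ^ 2 / 2 with hx
  set y := 2 / 3 * (3 * A ^ 2 - B) - (-A) ^ 2 / 2 with hy
  constructor
  · apply Real.le_sqrt_of_sq_le
    have e : (A / 2) ^ 2 = (x + y) / 4 := by rw [hx, hy]; ring
    rw [← norm_pow, e, norm_div]
    have := norm_add_le x y
    simp only [Complex.norm_ofNat]
    linarith
  · have e : B / 6 = (3 * x + y) / 8 := by rw [hx, hy]; ring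
    rw [e, norm_div]
    have := norm_add_le (3 * x) y
    rw [norm_mul] at this
    simp only [Complex.norm_ofNat] at this ⊢
    linarith
end

section
/- Let 0 ≤ α < 1, β ∈ (−π/2, π/2), λ ≥ 1, and let f ∈ Σ with inverse extension g satisfy Re(e^{iβ}((1−λ)f(z)/z + λ f'(z))) > α·cos β for all z ∈ U \ {0} and Re(e^{iβ}((1−λ)g(w)/w + λ g'(w))) > α·cos β for all w ∈ U \ {0}. Then |a₂| ≤ √(2(1−α)cos β / (2λ+1)) and |a₃| ≤ 2(1−α)cos β / (2λ+1), where a₂ = f''(0)/2 and a₃ = f'''(0)/6. -/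
open Metric Real Complex

lemma np_decomp (f : ℂ → ℂ) (hf : AnalyticOnNhd ℂ f (ball 0 1)) (hf0 : f 0 = 0) :
    ∃ k : ℂ → ℂ, DifferentiableOn ℂ k (ball 0 1) ∧ k 0 = iteratedDeriv 3 f 0 / 6 ∧
      ∀ z, f z = deriv f 0 * z + iteratedDeriv 2 f 0 / 2 * z ^ 2 + z ^ 3 * k z := by
  have h0 : AnalyticAt ℂ f 0 := hf 0 (by simp)
  have hp := h0.hasFPowerSeriesAt
  have h1 := hp.has_fpower_series_dslope_fslope
  have h2 := h1.has_fpower_series_dslope_fslope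
  have h3 := h2.has_fpower_series_dslope_fslope
  have hb : ball (0:ℂ) 1 ∈ nhds (0:ℂ) := ball_mem_nhds _ one_pos
  have d1 := (differentiableOn_dslope hb).2 hf.differentiableOn
  have d2 := (differentiableOn_dslope hb).2 d1
  have d3 := (differentiableOn_dslope hb).2 d2
  have e1 := h1.coeff_zero 1
  have e2 := h2.coeff_zero 1
  have e3 := h3.coeff_zero 1
  have c2 : dslope (dslope f 0) 0 0 = iteratedDeriv 2 f 0 / 2 := by
    rw [← h2.coeff_zero 1]
    change FormalMultilinearSeries.coeff _ 0 = _
    simp [FormalMultilinearSeries.coeff_fslope, FormalMultilinearSeries.coeff_ofScalars]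
  have c3 : dslope (dslope (dslope f 0) 0) 0 0 = iteratedDeriv 3 f 0 / 6 := by
    rw [← h3.coeff_zero 1]
    change FormalMultilinearSeries.coeff _ 0 = _
    simp [FormalMultilinearSeries.coeff_fslope, FormalMultilinearSeries.coeff_ofScalars,
      Nat.factorial]
  refine ⟨_, d3, c3, fun z => ?_⟩
  have s1 := sub_smul_dslope f 0 z
  have s2 := sub_smul_dslope (dslope f 0) 0 z
  have s3 := sub_smul_dslope (dslope (dslope f 0) 0) 0 z
  rw [c2] at s3
  rw [dslope_same] at s2
  simp only [sub_zero, smul_eq_mul, hf0] at s1 s2 s3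
  linear_combination -s1 - z * s2 - z ^ 2 * s3

lemma np_cara (H K : ℂ → ℂ) (c : ℂ) (hH : DifferentiableOn ℂ H (ball 0 1))
    (hpos : ∀ z ∈ ball (0:ℂ) 1, 0 < (H z).re) (hK : ContinuousAt K 0)
    (hHK : ∀ z ∈ ball (0:ℂ) 1, H z = H 0 + c * z + z ^ 2 * K z) :
    ‖K 0‖ ≤ 2 * (H 0).re := by
  set p := H 0 with hp
  have hp0 : 0 < p.re := hpos 0 (by simp)
  have hneg : Set.MapsTo (fun z : ℂ => -z) (ball 0 1) (ball 0 1) := by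
    intro z hz; simpa using hz
  set S : ℂ → ℂ := fun z => (H z + H (-z)) / 2 with hS
  have hSd : DifferentiableOn ℂ S (ball 0 1) :=
    (hH.add (hH.comp differentiableOn_id.neg hneg)).div_const 2
  have hSpos : ∀ z ∈ ball (0:ℂ) 1, 0 < (S z).re := by
    intro z hz
    have h1 := hpos z hz
    have h2 := hpos (-z) (hneg hz)
    have : S z = ((1/2 : ℝ) : ℂ) * (H z + H (-z)) := by simp only [hS]; push_cast; ring
    rw [this, Complex.re_ofReal_mul, Complex.add_re]
    linarith
  have hSK : ∀ z ∈ ball (0:ℂ) 1, S z - p = z ^ 2 * ((K z + K (-z)) / 2) := by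
    intro z hz
    simp only [hS]; rw [hHK z hz, hHK (-z) (hneg hz)]; ring
  have hden : ∀ z ∈ ball (0:ℂ) 1, S z + (starRingEnd ℂ) p ≠ 0 := by
    intro z hz h
    have := congrArg Complex.re h
    simp at this
    linarith [hSpos z hz]
  set ψ : ℂ → ℂ := fun z => (S z - p) / (S z + (starRingEnd ℂ) p) with hψ
  have hψd : DifferentiableOn ℂ ψ (ball 0 1) :=
    (hSd.sub_const p).div (hSd.add_const _) hden
  have hS0 : S 0 = p := by simp [hS, hp]
  have hψ0 : ψ 0 = 0 := by simp [hψ, hS0]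
  have hmaps : Set.MapsTo ψ (ball 0 1) (closedBall (ψ 0) 1) := by
    intro z hz
    rw [hψ0, mem_closedBall_zero_iff]
    simp only [hψ, norm_div]
    apply div_le_one_of_le₀ _ (norm_nonneg _)
    rw [← sq_le_sq₀ (norm_nonneg _) (norm_nonneg _), Complex.sq_norm, Complex.sq_norm,
      Complex.normSq_apply, Complex.normSq_apply]
    simp
    nlinarith [mul_pos (hSpos z hz) hp0]
  have hKneg : ContinuousAt (fun z => K (-z)) 0 := by
    apply ContinuousAt.comp (g := K) (f := fun z : ℂ => -z)
    · simpa using hK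
    · fun_prop
  have hL : ContinuousAt (fun z => (K z + K (-z)) / 2) 0 := (hK.add hKneg).div_const 2
  have hball : ball (0:ℂ) 1 ∈ nhds (0:ℂ) := ball_mem_nhds _ one_pos
  have hSc : ContinuousAt S 0 := (hSd.differentiableAt hball).continuousAt
  have hlit : (fun z => ψ z - ψ 0) =o[nhds 0] (fun w : ℂ => ‖w - 0‖ ^ 1) := by
    have hq : ContinuousAt (fun z => z * (((K z + K (-z)) / 2) / (S z + (starRingEnd ℂ) p))) 0 :=
      continuousAt_id.mul (hL.div (hSc.add continuousAt_const) (hden 0 (by simp)))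
    have hq1 := (Asymptotics.isLittleO_one_iff ℂ).2 (by simpa using hq.tendsto)
    have := (Asymptotics.isBigO_refl (fun z : ℂ => z) (nhds 0)).mul_isLittleO hq1
    refine (this.congr' (g₂ := fun w : ℂ => w) ?_ ?_).norm_right.congr_right (fun w => by simp)
    · filter_upwards [hball] with z hz
      rw [hψ0, hψ]; simp only [hSK z hz]; ring
    · exact Filter.Eventually.of_forall fun z => mul_one z
  have key : ∀ z ∈ ball (0:ℂ) 1, z ≠ 0 → ‖(K z + K (-z)) / 2‖ * (1 - ‖z‖ ^ 2) ≤ 2 * p.re := by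
    intro z hz hz0
    have h := dist_le_mul_div_pow_of_mapsTo_ball_of_isLittleO hψd hmaps hlit hz
    rw [hψ0] at h
    simp only [dist_zero_right, div_one, one_mul, Nat.reduceAdd] at h
    have hmul : ψ z * (S z + (starRingEnd ℂ) p) = S z - p := div_mul_cancel₀ _ (hden z hz)
    have hpp : (p + (starRingEnd ℂ) p) = ((2 * p.re : ℝ) : ℂ) := Complex.add_conj p
    have h2 : S z - p = ψ z * (S z - p) + ψ z * ((2 * p.re : ℝ) : ℂ) := by
      rw [← hpp]; linear_combination -hmul
    have h3 : ‖S z - p‖ ≤ ‖z‖ ^ 2 * ‖S z - p‖ + ‖z‖ ^ 2 * (2 * p.re) := by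
      calc ‖S z - p‖ = ‖ψ z * (S z - p) + ψ z * ((2 * p.re : ℝ) : ℂ)‖ := by rw [← h2]
        _ ≤ ‖ψ z‖ * ‖S z - p‖ + ‖ψ z‖ * (2 * p.re) := by
          refine (norm_add_le _ _).trans ?_
          rw [norm_mul, norm_mul, Complex.norm_real, Real.norm_of_nonneg (by positivity)]
        _ ≤ _ := by gcongr
    rw [hSK z hz, norm_mul, norm_pow] at h3
    have hz2 : 0 < ‖z‖ ^ 2 := by positivity
    refine le_of_mul_le_mul_left ?_ hz2
    nlinarith
  have hlim : ContinuousAt (fun z : ℂ => ‖(K z + K (-z)) / 2‖ * (1 - ‖z‖ ^ 2)) 0 :=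
    hL.norm.mul (by fun_prop)
  have ht := hlim.tendsto.mono_left (nhdsWithin_le_nhds (s := {0}ᶜ))
  have := le_of_tendsto ht (b := 2 * p.re) (by
    filter_upwards [nhdsWithin_le_nhds hball, self_mem_nhdsWithin] with z hz hz0
    exact key z hz hz0)
  simpa using this

lemma np_coeff (α β lam : ℝ) (hα1 : α < 1)
    (hβ : β ∈ Set.Ioo (-(π / 2)) (π / 2)) (hlam : 1 ≤ lam) (f k : ℂ → ℂ) (a : ℂ)
    (hk : DifferentiableOn ℂ k (ball 0 1))
    (hf : ∀ z, f z = 1 * z + a * z ^ 2 + z ^ 3 * k z)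
    (hre_f : ∀ z ∈ ball (0 : ℂ) 1, z ≠ 0 →
      α * Real.cos β <
        (Complex.exp (Complex.I * β) *
          ((1 - (lam : ℂ)) * (f z / z) + (lam : ℂ) * deriv f z)).re) :
    ‖k 0‖ ≤ 2 * (1 - α) * Real.cos β / (2 * lam + 1) := by
  have hcos : 0 < Real.cos β := Real.cos_pos_of_mem_Ioo hβ
  set e := Complex.exp (Complex.I * β) with he
  have hen : ‖e‖ = 1 := by rw [he, mul_comm]; exact Complex.norm_exp_ofReal_mul_I β
  have here : e.re = Real.cos β := by rw [he, mul_comm]; exact Complex.exp_ofReal_mul_I_re β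
  have hball : ball (0:ℂ) 1 ∈ nhds (0:ℂ) := ball_mem_nhds _ one_pos
  have hk' : DifferentiableOn ℂ (deriv k) (ball 0 1) := hk.deriv isOpen_ball
  set K : ℂ → ℂ := fun z => e * ((1 + 2 * lam) * k z + lam * (z * deriv k z)) with hK
  have hKd : DifferentiableOn ℂ K (ball 0 1) :=
    ((hk.const_mul _).add ((differentiableOn_id.mul hk').const_mul _)).const_mul _
  set H : ℂ → ℂ := fun z => (e - (α * Real.cos β : ℝ)) + e * (1 + lam) * a * z + z ^ 2 * K z
    with hH
  have hHd : DifferentiableOn ℂ H (ball 0 1) := by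
    apply DifferentiableOn.add (by fun_prop)
    exact DifferentiableOn.mul (by fun_prop) hKd
  have hH0 : H 0 = e - (α * Real.cos β : ℝ) := by simp [hH]
  have hH0re : (H 0).re = (1 - α) * Real.cos β := by
    rw [hH0, Complex.sub_re, here, Complex.ofReal_re]; ring
  have := np_cara H K (e * (1 + lam) * a) hHd ?_ (hKd.differentiableAt hball).continuousAt ?_
  · have hK0 : ‖K 0‖ = (2 * lam + 1) * ‖k 0‖ := by
      have : K 0 = e * (((2 * lam + 1 : ℝ) : ℂ) * k 0) := by simp [hK]; ring_nf; simp
      rw [this, norm_mul, norm_mul, hen, Complex.norm_real, Real.norm_of_nonneg (by linarith)]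
      ring
    rw [hK0, hH0re] at this
    rw [le_div_iff₀ (by linarith)]
    linarith
  · intro z hz
    by_cases h0 : z = 0
    · rw [h0, hH0re]; exact mul_pos (by linarith) hcos
    have h1 := hre_f z hz h0
    have hkz : HasDerivAt k (deriv k z) z :=
      (hk.differentiableAt (isOpen_ball.mem_nhds hz)).hasDerivAt
    have hd : HasDerivAt f (1 + 2 * a * z + 3 * z ^ 2 * k z + z ^ 3 * deriv k z) z := by
      have hh := (((hasDerivAt_id z).const_mul (1:ℂ)).add ((hasDerivAt_pow 2 z).const_mul a)).add
        ((hasDerivAt_pow 3 z).mul hkz)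
      refine (hh.congr_deriv ?_).congr_of_eventuallyEq (Filter.Eventually.of_forall hf)
      push_cast; ring
    have hfz : f z / z = 1 + a * z + z ^ 2 * k z := by
      rw [hf]; field_simp
    rw [hd.deriv, hfz] at h1
    have : H z = e * ((1 - (lam : ℂ)) * (1 + a * z + z ^ 2 * k z) + (lam : ℂ) *
        (1 + 2 * a * z + 3 * z ^ 2 * k z + z ^ 3 * deriv k z)) - (α * Real.cos β : ℝ) := by
      simp only [hH, hK]; ring
    rw [this, Complex.sub_re, Complex.ofReal_re]
    linarith
  · intro z hz
    rw [hH0]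

lemma np_cancel (P Q : ℂ → ℂ) (hP : ContinuousAt P 0) (hQ : ContinuousAt Q 0)
    (h : ∀ᶠ z in nhds (0:ℂ), z * P z = z * Q z) : ∀ᶠ z in nhds (0:ℂ), P z = Q z := by
  refine (ContinuousAt.eventuallyEq_nhds_iff_eventuallyEq_nhdsNE hP hQ).1 ?_
  filter_upwards [nhdsWithin_le_nhds h, self_mem_nhdsWithin] with z hz h0
  exact mul_left_cancel₀ h0 hz

lemma np_inverse (f g k m : ℂ → ℂ) (a b c : ℂ) (hk : ContinuousAt k 0) (hm : ContinuousAt m 0)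
    (hg : ContinuousAt g 0) (hg0 : g 0 = 0)
    (hfk : ∀ z, f z = 1 * z + a * z ^ 2 + z ^ 3 * k z)
    (hgm : ∀ z, g z = c * z + b * z ^ 2 + z ^ 3 * m z)
    (hfg : ∀ᶠ w in nhds (0 : ℂ), f (g w) = w) : c = 1 ∧ m 0 = 2 * a ^ 2 - k 0 := by
  have hkg : ContinuousAt (fun w => k (g w)) 0 := by
    apply ContinuousAt.comp (g := k) (f := g)
    · rwa [hg0]
    · exact hg
  obtain ⟨q, hq⟩ : ∃ q : ℂ → ℂ, ∀ w, q w = k (g w) := ⟨fun w => k (g w), fun _ => rfl⟩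
  have hqc : ContinuousAt q 0 := by
    rw [show q = fun w => k (g w) from funext hq]; exact hkg
  have hid : ContinuousAt (fun w : ℂ => w) 0 := continuousAt_id
  have E1 := np_cancel (fun w => (c + b * w + w ^ 2 * m w) + a * w * (c + b * w + w ^ 2 * m w) ^ 2
      + w ^ 2 * (c + b * w + w ^ 2 * m w) ^ 3 * q w) (fun _ => 1)
    (by fun_prop) (by fun_prop) (by
      filter_upwards [hfg] with w hw
      rw [hfk] at hw
      have hh := hgm w
      rw [← hq w] at hw
      generalize q w = x at *
      rw [hh] at hw
      linear_combination hw)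
  have hc : c = 1 := by simpa using E1.self_of_nhds
  subst hc
  have E2 := np_cancel (fun w => (b + w * m w) + a * (1 + b * w + w ^ 2 * m w) ^ 2
      + w * (1 + b * w + w ^ 2 * m w) ^ 3 * q w) (fun _ => 0)
    (by fun_prop) (by fun_prop) (by
      filter_upwards [E1] with w hw
      linear_combination hw)
  have hb : b = -a := by
    have := E2.self_of_nhds
    simp at this
    linear_combination this
  subst hb
  have E3 := np_cancel (fun w => m w + a * (-a + w * m w) * (2 + -a * w + w ^ 2 * m w)
      + (1 + -a * w + w ^ 2 * m w) ^ 3 * q w) (fun _ => 0)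
    (by fun_prop) (by fun_prop) (by
      filter_upwards [E2] with w hw
      linear_combination hw)
  have := E3.self_of_nhds
  simp [hq, hg0] at this
  exact ⟨rfl, by linear_combination this⟩


/-- Coefficient bounds for the class `NP^{1,λ}_Σ(β,α)`. -/
theorem coeff_bounds_NP_lambda
    (α β lam : ℝ) (hα0 : 0 ≤ α) (hα1 : α < 1)
    (hβ : β ∈ Set.Ioo (-(π / 2)) (π / 2)) (hlam : 1 ≤ lam)
    (f g : ℂ → ℂ)
    -- `f` is bi-univalent with inverse extension `g`.
    (hf_an : AnalyticOnNhd ℂ f (ball 0 1)) (hf0 : f 0 = 0) (hf1 : deriv f 0 = 1)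
    (hf_inj : Set.InjOn f (ball 0 1))
    (hg_an : AnalyticOnNhd ℂ g (ball 0 1)) (hg_inj : Set.InjOn g (ball 0 1))
    (hg0 : g 0 = 0) (hfg : ∀ᶠ w in nhds (0 : ℂ), f (g w) = w)
    -- real-part condition for `f`
    (hre_f : ∀ z ∈ ball (0 : ℂ) 1, z ≠ 0 →
      α * Real.cos β <
        (Complex.exp (Complex.I * β) *
          ((1 - (lam : ℂ)) * (f z / z) + (lam : ℂ) * deriv f z)).re)
    -- real-part condition for `g`
    (hre_g : ∀ w ∈ ball (0 : ℂ) 1, w ≠ 0 →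
      α * Real.cos β <
        (Complex.exp (Complex.I * β) *
          ((1 - (lam : ℂ)) * (g w / w) + (lam : ℂ) * deriv g w)).re) :
    ‖iteratedDeriv 2 f 0 / 2‖ ≤
        Real.sqrt (2 * (1 - α) * Real.cos β / (2 * lam + 1)) ∧
    ‖iteratedDeriv 3 f 0 / 6‖ ≤ 2 * (1 - α) * Real.cos β / (2 * lam + 1) := by
  obtain ⟨k, hkd, hk0, hfk⟩ := np_decomp f hf_an hf0
  obtain ⟨m, hmd, hm0, hgm⟩ := np_decomp g hg_an hg0
  have hball : ball (0:ℂ) 1 ∈ nhds (0:ℂ) := ball_mem_nhds _ one_pos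
  rw [hf1] at hfk
  obtain ⟨hc, hm⟩ := np_inverse f g k m _ _ _ (hkd.differentiableAt hball).continuousAt
    (hmd.differentiableAt hball).continuousAt (hg_an 0 (by simp)).continuousAt hg0 hfk hgm hfg
  rw [hc] at hgm
  have B1 := np_coeff α β lam hα1 hβ hlam f k _ hkd hfk hre_f
  have B2 := np_coeff α β lam hα1 hβ hlam g m _ hmd hgm hre_g
  refine ⟨?_, hk0 ▸ B1⟩
  apply Real.le_sqrt_of_sq_le
  rw [← norm_pow]
  set a := iteratedDeriv 2 f 0 / 2
  have h2 : a ^ 2 = (m 0 + k 0) / 2 := by rw [hm]; ring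
  rw [h2, norm_div, Complex.norm_ofNat]
  have := norm_add_le (m 0) (k 0)
  linarith
end
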